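/- Assume k has characteristic zero and the hyperplanes are in general position. Let R_+ denote the (maximal) ideal of R generated by the images of all the variables T_0,…,T_d, X_1,…,X_n. Then for every prime ideal 𝔭 of R with 𝔭 ≠ R_+, the localization R_𝔭 is a regular local ring. In particular R has isolated singularities. -/

import Mathlib

open MvPolynomial

/-- The polynomial `h_i = X_i^{p_i} − ℓ_i` in `S = k[T_0,…,T_d, X_1,…,X_n]`, where
`ℓ_i = Σ_j λ_{ij} T_j`; the `T`'s are the variables indexed by `Sum.inl` and the `X`'s
are the variables indexed by `Sum.inr`. -/
noncomputable def GLh (k : Type*) [Field k] (d n : ℕ) (p : Fin n → ℕ)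
    (lam : Fin n → Fin (d + 1) → k) (i : Fin n) :
    MvPolynomial (Fin (d + 1) ⊕ Fin n) k :=
  X (Sum.inr i) ^ p i - ∑ j, C (lam i j) * X (Sum.inl j)

/-- The Geigle–Lenzing complete intersection `R = S/(h_1, …, h_n)`. -/
abbrev GLring (k : Type*) [Field k] (d n : ℕ) (p : Fin n → ℕ)
    (lam : Fin n → Fin (d + 1) → k) : Type _ :=
  MvPolynomial (Fin (d + 1) ⊕ Fin n) k ⧸ Ideal.span (Set.range (GLh k d n p lam))

/-- A Noetherian local ring is regular if its maximal ideal can be generated by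
(Krull dimension)-many elements. -/
def IsRegularLocal (A : Type*) [CommRing A] [IsLocalRing A] : Prop :=
  IsNoetherianRing A ∧ ∃ s : Finset A,
    Ideal.span (s : Set A) = IsLocalRing.maximalIdeal A ∧
      (s.card : WithBot (WithTop ℕ)) = ringKrullDim A

/-!
The Jacobian criterion. Let `P` be the preimage of `𝔭` in the polynomial ring `S`. If the rows of
the Jacobian matrix of `h_1, …, h_n` are linearly independent over `S ⧸ P`, then the `h_i` are
linearly independent in the cotangent space of the regular local ring `S_P`, so they are part of a
regular system of parameters and `R_𝔭 = S_P / (h_1, …, h_n)` is regular.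

The `i`-th row of the matrix is `(-λ_i | p_i X_i ^ (p_i - 1) e_i)`, so only the rows with `X_i ∈ P`
can be dependent, and they are dependent only if the `ℓ_i` are. By general position either those
`ℓ_i` are independent, or they span all linear forms. In the second case `ℓ_i = X_i ^ p_i` on
`S ⧸ P` shows that all the `T_j`, and then all the `X_i`, lie in `P`, that is, `𝔭 = R_+`.
-/

open IsLocalRing

section RegularQuotient

variable {ι : Type*}

lemma exists_span_range_sup_span_range_eq_top {K V : Type*} [Field K] [AddCommGroup V] [Module K V]
    [FiniteDimensional K V] [Fintype ι] {v : ι → V} (hv : LinearIndependent K v) :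
    ∃ (m : ℕ) (w : Fin m → V), m + Fintype.card ι = Module.finrank K V ∧
      Submodule.span K (Set.range v) ⊔ Submodule.span K (Set.range w) = ⊤ := by
  obtain ⟨W, hW⟩ := (Submodule.span K (Set.range v)).exists_isCompl
  let b := Module.finBasis K W
  refine ⟨_, W.subtype ∘ b, ?_, ?_⟩
  · rw [← finrank_span_eq_card hv, add_comm, Submodule.finrank_add_eq_of_isCompl hW]
  · rw [Set.range_comp, ← Submodule.map_span, b.span_eq, Submodule.map_subtype_top, hW.sup_eq_top]

lemma spanFinrank_span_range_le_card {R M : Type*} [Semiring R] [AddCommMonoid M] [Module R M]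
    [Fintype ι] (v : ι → M) :
    (Submodule.span R (Set.range v)).spanFinrank ≤ Fintype.card ι := by
  refine (Submodule.spanFinrank_span_le_ncard_of_finite (Set.finite_range v)).trans ?_
  simpa using Finite.card_range_le v

lemma spanFinrank_maximalIdeal_add_card_le {A B : Type*} [CommRing A] [IsLocalRing A]
    [IsNoetherianRing A] [CommRing B] [IsLocalRing B] [Fintype ι] {f : A →+* B}
    (hf : (maximalIdeal A).map f = maximalIdeal B) {h : ι → maximalIdeal A}
    (hlin : LinearIndependent (ResidueField A) fun i ↦ (maximalIdeal A).toCotangent (h i))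
    (hker : ∀ i, f (h i) = 0) :
    (maximalIdeal B).spanFinrank + Fintype.card ι ≤ (maximalIdeal A).spanFinrank := by
  obtain ⟨m, w, hcard, hspan⟩ := exists_span_range_sup_span_range_eq_top hlin
  choose z hz using fun j ↦ (maximalIdeal A).toCotangent_surjective (w j)
  have hgenA : Submodule.span A (Set.range h ∪ Set.range z) = ⊤ := by
    rw [← CotangentSpace.span_image_eq_top_iff, Set.image_union, Submodule.span_union,
      ← Set.range_comp, ← Set.range_comp]
    exact (funext hz : (maximalIdeal A).toCotangent ∘ z = w) ▸ hspan
  have hgenB : maximalIdeal B = Ideal.span (Set.range fun j ↦ f (z j)) := by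
    have hgen := congrArg (Submodule.map (maximalIdeal A).subtype) hgenA
    rw [Submodule.map_span, Submodule.map_subtype_top, Set.image_union, ← Set.range_comp,
      ← Set.range_comp] at hgen
    have hzero : Ideal.span (f '' Set.range ((maximalIdeal A).subtype ∘ h)) = ⊥ := by
      simp [hker]
    rw [← hf]
    nth_rw 1 [← hgen]
    rw [Ideal.submodule_span_eq, Ideal.map_span, Set.image_union, Ideal.span_union,
      hzero, bot_sup_eq, ← Set.range_comp]
    rfl
  have hle : (maximalIdeal B).spanFinrank ≤ m := by
    rw [hgenB]
    simpa using spanFinrank_span_range_le_card fun j ↦ f (z j)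
  rw [spanFinrank_maximalIdeal_eq_finrank_cotangentSpace A, ← hcard]
  gcongr

theorem isRegularLocalRing_quotient_span {A : Type*} [CommRing A] [IsRegularLocalRing A] [Finite ι]
    {h : ι → maximalIdeal A}
    (hlin : LinearIndependent (ResidueField A) fun i ↦ (maximalIdeal A).toCotangent (h i)) :
    IsRegularLocalRing (A ⧸ Ideal.span (Set.range fun i ↦ (h i : A))) := by
  have := Fintype.ofFinite ι
  set I := Ideal.span (Set.range fun i ↦ (h i : A))
  have hIm : I ≤ maximalIdeal A := Ideal.span_le.2 (Set.range_subset_iff.2 fun i ↦ (h i).2)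
  have : Nontrivial (A ⧸ I) :=
    Ideal.Quotient.nontrivial_iff.2 (ne_top_of_le_ne_top (maximalIdeal.isMaximal A).ne_top hIm)
  have : IsLocalRing (A ⧸ I) := .of_surjective' (Ideal.Quotient.mk I) Ideal.Quotient.mk_surjective
  have hemb : (maximalIdeal (A ⧸ I)).spanFinrank + Fintype.card ι ≤ (maximalIdeal A).spanFinrank :=
    spanFinrank_maximalIdeal_add_card_le
      (map_maximalIdeal_of_surjective _ Ideal.Quotient.mk_surjective) hlin
      fun i ↦ Ideal.Quotient.eq_zero_iff_mem.2 (Ideal.subset_span ⟨i, rfl⟩)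
  have hrank : I.spanFinrank ≤ Fintype.card ι := spanFinrank_span_range_le_card _
  have hdim : ringKrullDim A ≤ ringKrullDim (A ⧸ I) + Fintype.card ι :=
    (ringKrullDim_le_ringKrullDim_quotient_add_spanFinrank I
      (by rwa [ringJacobson_eq_maximalIdeal])).trans (by gcongr)
  apply IsRegularLocalRing.of_spanFinrank_maximalIdeal_le
  rw [← (isRegularLocalRing_iff A).1 inferInstance] at hdim
  have hemb' := (Nat.cast_le (α := WithBot ℕ∞)).2 hemb
  rw [Nat.cast_add] at hemb'
  exact ENat.WithBot.add_le_add_natCast_right_iff.1 (hemb'.trans hdim)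

end RegularQuotient

section Jacobian

variable {R S ι J : Type*} [CommRing R] [CommRing S] [Algebra R S]

/-- The linear functional on the cotangent space `I ⧸ I ^ 2` induced by a derivation `D`, sending
the class of `x` to the class of `D x`. Applied to a family of derivations it reads off the rows of
a Jacobian matrix as coordinates of cotangent vectors. -/
noncomputable def cotangentFunctional (D : Derivation R S S) (I : Ideal S) :
    I.Cotangent →ₗ[S ⧸ I] S ⧸ I :=
  LinearMap.extendScalarsOfSurjective (R := S) Ideal.Quotient.mk_surjective <|
  Ideal.Cotangent.lift
    { toFun := fun x ↦ Ideal.Quotient.mk I (D x)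
      map_add' := fun x y ↦ by simp
      map_smul' := fun s x ↦ by
        simp [Algebra.smul_def, Ideal.Quotient.eq_zero_iff_mem.2 x.2] }
    fun x y ↦ by simp [Ideal.Quotient.eq_zero_iff_mem.2 x.2, Ideal.Quotient.eq_zero_iff_mem.2 y.2]

lemma linearIndependent_toCotangent_of_derivation {I : Ideal S} {h : ι → I}
    (D : J → Derivation R S S)
    (hjac : LinearIndependent (S ⧸ I) fun i j ↦ Ideal.Quotient.mk I (D j (h i))) :
    LinearIndependent (S ⧸ I) fun i ↦ I.toCotangent (h i) :=
  .of_comp (LinearMap.pi fun j ↦ cotangentFunctional (D j) I) hjac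

lemma linearIndependent_toCotangent_localization {P : Ideal S} [P.IsPrime] {h : ι → P}
    (hlin : LinearIndependent (S ⧸ P) fun i ↦ P.toCotangent (h i))
    {h' : ι → maximalIdeal (Localization.AtPrime P)}
    (hh' : ∀ i, (h' i : Localization.AtPrime P) = algebraMap S _ (h i)) :
    LinearIndependent P.ResidueField fun i ↦
      (maximalIdeal (Localization.AtPrime P)).toCotangent (h' i) := by
  set A := Localization.AtPrime P
  let _ : Module (S ⧸ P) (CotangentSpace A) :=
    Module.compHom _ (algebraMap (S ⧸ P) P.ResidueField)
  have : IsScalarTower (S ⧸ P) P.ResidueField (CotangentSpace A) :=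
    IsScalarTower.of_compHom (S ⧸ P) P.ResidueField _
  -- `κ(P) = Frac (S ⧸ P)`, so the coefficients of a relation may be taken in `S ⧸ P`; lifted to `S`,
  -- the relation lies in `P ^ 2` after multiplication by some `w ∉ P`.
  rw [← LinearIndependent.iff_fractionRing (S ⧸ P)]
  rw [linearIndependent_iff'] at hlin ⊢
  intro t g hg i hi
  choose s hs using fun i ↦ Ideal.Quotient.mk_surjective (g i)
  have hmem : algebraMap S A (∑ i ∈ t, s i * h i) ∈ (P ^ 2).map (algebraMap S A) := by
    have hcot : (maximalIdeal A).toCotangent (∑ i ∈ t, algebraMap S A (s i) • h' i) = 0 := by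
      rw [← hg, map_sum]
      refine Finset.sum_congr rfl fun i _ ↦ ?_
      rw [← hs, map_smul]
      rfl
    rw [Ideal.map_pow, Localization.AtPrime.map_eq_maximalIdeal]
    simpa [hh', Algebra.smul_def] using (Ideal.toCotangent_eq_zero _ _).1 hcot
  obtain ⟨w, hw, hwmem⟩ :=
    (IsLocalization.algebraMap_mem_map_algebraMap_iff P.primeCompl A _ _).1 hmem
  have hsum : ∑ i ∈ t, (Ideal.Quotient.mk P w * g i) • P.toCotangent (h i) = 0 := by
    have hcot : P.toCotangent (∑ i ∈ t, (w * s i) • h i) = 0 := by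
      rw [Ideal.toCotangent_eq_zero]
      simpa [Finset.mul_sum, mul_assoc] using hwmem
    rw [← hcot, map_sum]
    refine Finset.sum_congr rfl fun i _ ↦ ?_
    rw [← hs, ← map_mul]
    rfl
  exact (mul_eq_zero.1 (hlin t _ hsum i hi)).resolve_left
    fun hw0 ↦ hw (Ideal.Quotient.eq_zero_iff_mem.1 hw0)

lemma isLocalization_atPrime_quotient_map (I : Ideal S) (q : Ideal (S ⧸ I)) [q.IsPrime] :
    IsLocalization.AtPrime (Localization.AtPrime (q.comap (Ideal.Quotient.mk I)) ⧸
      I.map (algebraMap S (Localization.AtPrime (q.comap (Ideal.Quotient.mk I))))) q := by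
  have hq : Algebra.algebraMapSubmonoid (S ⧸ I) (q.comap (Ideal.Quotient.mk I)).primeCompl =
      q.primeCompl :=
    q.map_primeCompl_comap_of_surjective _ Ideal.Quotient.mk_surjective
  rw [IsLocalization.AtPrime, ← hq]
  infer_instance

theorem isRegularLocalRing_localization_quotient_of_jacobian [IsRegularRing S] [Finite ι]
    (h : ι → S) (D : J → Derivation R S S) (q : Ideal (S ⧸ Ideal.span (Set.range h))) [q.IsPrime]
    (hjac : LinearIndependent (S ⧸ q.comap (Ideal.Quotient.mk _)) fun i j ↦
      Ideal.Quotient.mk (q.comap (Ideal.Quotient.mk _)) (D j (h i))) :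
    IsRegularLocalRing (Localization.AtPrime q) := by
  let I := Ideal.span (Set.range h)
  let P := q.comap (Ideal.Quotient.mk I)
  let A := Localization.AtPrime P
  have hP (i : ι) : h i ∈ P :=
    Ideal.mk_ker.ge.trans (Ideal.ker_le_comap _) (Ideal.subset_span ⟨i, rfl⟩)
  have hmem (i : ι) : algebraMap S A (h i) ∈ maximalIdeal A :=
    Localization.AtPrime.map_eq_maximalIdeal (I := P) ▸ Ideal.mem_map_of_mem _ (hP i)
  have hreg : IsRegularLocalRing (A ⧸ Ideal.span (Set.range fun i ↦ algebraMap S A (h i))) :=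
    isRegularLocalRing_quotient_span (h := fun i ↦ ⟨_, hmem i⟩) <|
      linearIndependent_toCotangent_localization (h := fun i ↦ ⟨h i, hP i⟩)
        (linearIndependent_toCotangent_of_derivation D hjac) fun _ ↦ rfl
  have hmap : I.map (algebraMap S A) = Ideal.span (Set.range fun i ↦ algebraMap S A (h i)) := by
    rw [Ideal.map_span, ← Set.range_comp]
    rfl
  rw [← hmap] at hreg
  have := isLocalization_atPrime_quotient_map I q
  exact .of_ringEquiv
    (IsLocalization.algEquiv q.primeCompl (A ⧸ I.map (algebraMap S A)) _).toRingEquiv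

end Jacobian

section LinearAlgebra

lemma linearIndepOn_or_span_image_eq_top {k V ι : Type*} [Field k] [AddCommGroup V] [Module k V]
    [FiniteDimensional k V] {v : ι → V}
    (hv : ∀ t : Finset ι, t.card ≤ Module.finrank k V → LinearIndepOn k v t)
    (s : Finset ι) :
    LinearIndepOn k v s ∨ Submodule.span k (v '' s) = ⊤ := by
  rcases le_total s.card (Module.finrank k V) with hs | hs
  · exact .inl (hv s hs)
  · obtain ⟨t, hts, ht⟩ := Finset.exists_subset_card_eq hs
    have hspan := (hv t ht.le).span_eq_top_of_card_eq_finrank' (by simpa using ht)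
    refine .inr (top_le_iff.1 (hspan.ge.trans (Submodule.span_mono ?_)))
    rintro _ ⟨i, rfl⟩
    exact ⟨i, hts i.2, rfl⟩

lemma linearIndependent_sumElim_single {K ι J : Type*} [CommRing K] [NoZeroDivisors K]
    [Finite ι] [DecidableEq ι] {s : Finset ι} {w : ι → J → K} {u : ι → K}
    (hw : LinearIndepOn K w s) (hu : ∀ i ∉ s, u i ≠ 0) :
    LinearIndependent K fun i ↦ (Sum.elim (w i) (Pi.single i (u i)) : J ⊕ ι → K) := by
  have := Fintype.ofFinite ι
  rw [Fintype.linearIndependent_iff]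
  intro c hc
  have hcompl (i : ι) (hi : i ∉ s) : c i = 0 := by
    have hcol : c i * u i = 0 := by simpa [Pi.single_apply] using congrFun hc (Sum.inr i)
    exact (mul_eq_zero.1 hcol).resolve_right (hu i hi)
  have hsum : ∑ i ∈ s, c i • w i = 0 := by
    rw [Finset.sum_subset s.subset_univ fun i _ hi ↦ by rw [hcompl i hi, zero_smul]]
    ext j
    simpa using congrFun hc (Sum.inl j)
  intro i
  by_cases hi : i ∈ s
  · exact linearIndepOn_finset_iff.1 hw c hsum i hi
  · exact hcompl i hi

end LinearAlgebra

section IdealOfVars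

variable {σ k : Type*} [Field k]

lemma isMaximal_idealOfVars : (idealOfVars σ k).IsMaximal := by
  have hker : idealOfVars σ k = RingHom.ker (constantCoeff (R := k) (σ := σ)) := by
    ext f
    rw [RingHom.mem_ker, ← pow_one (idealOfVars σ k), mem_pow_idealOfVars_iff']
    simp [constantCoeff_eq, Finsupp.degree_eq_zero_iff]
  rw [hker]
  exact RingHom.ker_isMaximal_of_surjective _ fun a ↦ ⟨C a, constantCoeff_C σ a⟩

lemma eq_span_range_mk_X_of_forall_mem {I : Ideal (MvPolynomial σ k)}
    {q : Ideal (MvPolynomial σ k ⧸ I)} (hq : q ≠ ⊤)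
    (hX : ∀ v, Ideal.Quotient.mk I (X v) ∈ q) :
    q = Ideal.span (Set.range fun v ↦ Ideal.Quotient.mk I (X v)) := by
  have hcomap : idealOfVars σ k = q.comap (Ideal.Quotient.mk I) :=
    isMaximal_idealOfVars.eq_of_le (Ideal.comap_ne_top _ hq)
      (Ideal.span_le.2 (Set.range_subset_iff.2 hX))
  rw [← Ideal.map_comap_of_surjective _ Ideal.Quotient.mk_surjective q, ← hcomap, Ideal.map_span,
    ← Set.range_comp]
  rfl

end IdealOfVars

section GeigleLenzing

variable {k : Type*} [Field k] {d n : ℕ} {p : Fin n → ℕ} {lam : Fin n → Fin (d + 1) → k}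

lemma pderiv_inl_GLh (i : Fin n) (j : Fin (d + 1)) :
    pderiv (Sum.inl j) (GLh k d n p lam i) = -C (lam i j) := by
  simp [GLh, pderiv_X, Derivation.leibniz, Derivation.leibniz_pow, Pi.single_apply]

lemma pderiv_inr_GLh (i j : Fin n) :
    pderiv (Sum.inr j) (GLh k d n p lam i) =
      if i = j then (p i : MvPolynomial (Fin (d + 1) ⊕ Fin n) k) * X (Sum.inr i) ^ (p i - 1)
      else 0 := by
  simp [GLh, pderiv_X, Derivation.leibniz, Derivation.leibniz_pow, Pi.single_apply]

variable {P : Ideal (MvPolynomial (Fin (d + 1) ⊕ Fin n) k)} [P.IsPrime]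

lemma linearIndependent_jacobian_GLh (hp : ∀ i, (p i : k) ≠ 0) {s : Finset (Fin n)}
    (hs : LinearIndepOn k lam s) (hX : ∀ i ∉ s, X (Sum.inr i) ∉ P) :
    LinearIndependent (MvPolynomial (Fin (d + 1) ⊕ Fin n) k ⧸ P) fun i v ↦
      Ideal.Quotient.mk P (pderiv v (GLh k d n p lam i)) := by
  set K := MvPolynomial (Fin (d + 1) ⊕ Fin n) k ⧸ P
  let w (i : Fin n) : Fin (d + 1) → K := algebraMap k K ∘ (-lam i)
  let u (i : Fin n) : K := (p i : K) * Ideal.Quotient.mk P (X (Sum.inr i)) ^ (p i - 1)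
  have hw : LinearIndepOn K w s := linearIndependent_algebraMap_comp_iff.2 hs.neg
  have hu : ∀ i ∉ s, u i ≠ 0 := fun i hi ↦ by
    refine mul_ne_zero ?_ (pow_ne_zero _ (Ideal.Quotient.eq_zero_iff_mem.not.2 (hX i hi)))
    simpa using (map_ne_zero (algebraMap k K)).2 (hp i)
  have hjac : (fun i v ↦ Ideal.Quotient.mk P (pderiv v (GLh k d n p lam i))) =
      fun i ↦ Sum.elim (w i) (Pi.single i (u i)) := by
    ext i (j | j)
    · rw [pderiv_inl_GLh]
      simp only [Sum.elim_inl, w, Function.comp_apply, Pi.neg_apply, map_neg]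
      rfl
    · rw [pderiv_inr_GLh]
      obtain rfl | hij := eq_or_ne i j
      · simp [u]
      · simp [hij, hij.symm]
  rw [hjac]
  exact linearIndependent_sumElim_single hw hu

lemma X_mem_of_span_image_eq_top (hp : ∀ i, p i ≠ 0) (hP : ∀ i, GLh k d n p lam i ∈ P)
    {s : Set (Fin n)} (hs : Submodule.span k (lam '' s) = ⊤) (hX : ∀ i ∈ s, X (Sum.inr i) ∈ P)
    (v : Fin (d + 1) ⊕ Fin n) : X v ∈ P := by
  let L : (Fin (d + 1) → k) →ₗ[k] MvPolynomial (Fin (d + 1) ⊕ Fin n) k ⧸ P :=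
    (Ideal.Quotient.mkₐ k P).toLinearMap ∘ₗ Fintype.linearCombination k fun j ↦ X (Sum.inl j)
  have hpow (i : Fin n) : Ideal.Quotient.mk P (X (Sum.inr i)) ^ p i = L (lam i) := by
    have hmk := Ideal.Quotient.eq_zero_iff_mem.2 (hP i)
    rw [GLh, map_sub, sub_eq_zero, map_pow] at hmk
    rw [hmk]
    simp [L, Fintype.linearCombination_apply, C_mul']
  have hL : L = 0 := by
    refine LinearMap.ext_on hs ?_
    rintro _ ⟨i, hi, rfl⟩
    rw [← hpow, Ideal.Quotient.eq_zero_iff_mem.2 (hX i hi), zero_pow (hp i), LinearMap.zero_apply]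
  rw [← Ideal.Quotient.eq_zero_iff_mem]
  rcases v with j | i
  · simpa [L] using LinearMap.congr_fun hL (Pi.single j 1)
  · exact eq_zero_of_pow_eq_zero ((hpow i).trans (by rw [hL, LinearMap.zero_apply]))

end GeigleLenzing

lemma isRegularLocal_of_isRegularLocalRing {A : Type*} [CommRing A] [IsRegularLocalRing A] :
    IsRegularLocal A := by
  obtain ⟨s, hcard, hspan⟩ := Submodule.FG.exists_span_finset_card_eq_spanFinrank
    (maximalIdeal A).fg_of_isNoetherianRing
  refine ⟨inferInstance, s, hspan, ?_⟩
  rw [hcard]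
  exact (isRegularLocalRing_iff A).1 inferInstance

theorem GLring_isolated_singularity_general (k : Type*) [Field k] (d n : ℕ) (p : Fin n → ℕ)
    (hp : ∀ i, (p i : k) ≠ 0) (lam : Fin n → Fin (d + 1) → k)
    (hgen : ∀ t : Finset (Fin n), t.card ≤ d + 1 →
      LinearIndependent k (fun i : t => lam i))
    (𝔭 : Ideal (GLring k d n p lam)) [𝔭.IsPrime]
    (h𝔭 : 𝔭 ≠ Ideal.span (Set.range fun v : Fin (d + 1) ⊕ Fin n =>
      Ideal.Quotient.mk (Ideal.span (Set.range (GLh k d n p lam))) (X v))) :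
    IsRegularLocal (Localization.AtPrime 𝔭) := by
  classical
  let P := 𝔭.comap (Ideal.Quotient.mk (Ideal.span (Set.range (GLh k d n p lam))))
  let s : Finset (Fin n) := {i | X (Sum.inr i) ∈ P}
  have hP (i : Fin n) : GLh k d n p lam i ∈ P :=
    Ideal.mk_ker.ge.trans (Ideal.ker_le_comap _) (Ideal.subset_span ⟨i, rfl⟩)
  have hspan : Submodule.span k (lam '' s) ≠ ⊤ := fun hspan ↦
    h𝔭 <| eq_span_range_mk_X_of_forall_mem (Ideal.IsPrime.ne_top ‹_›) <|
      X_mem_of_span_image_eq_top (P := P) (fun i hi ↦ hp i (by simp [hi])) hP hspan (by simp [s])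
  have hs : LinearIndepOn k lam s :=
    (linearIndepOn_or_span_image_eq_top (fun t ht ↦ hgen t (by simpa using ht)) s).resolve_right
      hspan
  have hreg : IsRegularLocalRing (Localization.AtPrime 𝔭) :=
    isRegularLocalRing_localization_quotient_of_jacobian _ (fun v ↦ pderiv v) 𝔭
      (linearIndependent_jacobian_GLh (P := P) hp hs (by simp [s]))
  exact isRegularLocal_of_isRegularLocalRing

/-- Assume `char k = 0` and the hyperplanes are in general position.
Let `R_+` be the ideal of `R` generated by the images of all the variables. Then for
every prime ideal `𝔭 ≠ R_+` of `R`, the localization `R_𝔭` is a regular local ring;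
in particular `R` has isolated singularities. -/
theorem GLring_isolated_singularity (k : Type*) [Field k] [CharZero k]
    (d n : ℕ) (hd : 1 ≤ d) (p : Fin n → ℕ) (hp : ∀ i, 0 < p i)
    (lam : Fin n → Fin (d + 1) → k)
    (hgen : ∀ t : Finset (Fin n), t.card ≤ d + 1 →
      LinearIndependent k (fun i : t => lam i))
    (𝔭 : Ideal (GLring k d n p lam)) [𝔭.IsPrime]
    (h𝔭 : 𝔭 ≠ Ideal.span (Set.range fun v : Fin (d + 1) ⊕ Fin n =>
      Ideal.Quotient.mk (Ideal.span (Set.range (GLh k d n p lam))) (X v))) :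
    IsRegularLocal (Localization.AtPrime 𝔭) :=
  GLring_isolated_singularity_general k d n p (fun i ↦ Nat.cast_ne_zero.2 (hp i).ne') lam hgen 𝔭 h𝔭
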